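/- Fix an integer k ≥ 2. Let f : ℝ → ℝ be a positive continuous 2π-periodic function, and let u₁, …, u_k : ℝ → ℝ be 2π-periodic C² functions, none identically zero, pairwise orthogonal in L²([0,2π]), each satisfying ∫₀^{2π} f uᵢ dθ = 0 and uᵢ'' + μᵢuᵢ = cᵢ f on ℝ for some real constants cᵢ, where μ₁ ≤ μ₂ ≤ … ≤ μ_k. Then μ_k ≥ ⌈(k−1)/2⌉². -/

import Mathlib

open Real

/-!
On a circle of length `T`, integration by parts gives `∫ u' w' = μ ∫ u w` for `f`-eigenfunctions
`u`, `w`, the first with `f`-eigenvalue `μ`: the term `c ∫ f w` vanishes. So on the span of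
eigenfunctions whose `f`-eigenvalues are at most `M` the Rayleigh quotient `∫ v'² / ∫ v²` is at
most `M`. If this span has dimension at least `2 m`, it contains some `v ≠ 0` that satisfies the
`2 m - 1` real conditions that the Fourier coefficients of index `|n| < m` vanish, and Parseval's
identity for `v` and `v'` gives a Rayleigh quotient of at least `(2 π m / T) ^ 2`.
-/

section Fourier

open MeasureTheory Set ComplexConjugate

variable {ι : Type*} {a b : ℝ}

lemma fourierCoeffOn_ofReal_neg (hab : a < b) (g : ℝ → ℝ) (n : ℤ) :
    fourierCoeffOn hab (fun x ↦ (g x : ℂ)) (-n) =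
      conj (fourierCoeffOn hab (fun x ↦ (g x : ℂ)) n) := by
  rw [fourierCoeffOn_eq_integral, fourierCoeffOn_eq_integral, Complex.real_smul, Complex.real_smul,
    map_mul, Complex.conj_ofReal, ← intervalIntegral.intervalIntegral_conj]
  simp only [fourier_neg, smul_eq_mul, map_mul, Complex.conj_ofReal, Complex.conj_conj]

lemma fourierCoeffOn_sum_mul [Fintype ι] (hab : a < b) {g : ι → ℝ → ℂ}
    (hg : ∀ i, IntervalIntegrable (g i) volume a b) (w : ι → ℂ) (n : ℤ) :
    fourierCoeffOn hab (fun x ↦ ∑ i, w i * g i x) n = ∑ i, w i * fourierCoeffOn hab (g i) n := by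
  have hint (i : ι) : IntervalIntegrable
      (fun x : ℝ ↦ w i * (fourier (-n) (x : AddCircle (b - a)) * g i x)) volume a b :=
    ((hg i).continuousOn_mul (by fun_prop)).const_mul _
  simp only [fourierCoeffOn_eq_integral, smul_eq_mul, Finset.mul_sum, mul_left_comm _ (w _)]
  rw [intervalIntegral.integral_finsetSum fun i _ ↦ hint i, Finset.smul_sum]
  simp only [intervalIntegral.integral_const_mul, mul_smul_comm]

lemma fourierCoeffOn_deriv_of_eq_endpoints (hab : a < b) {g g' : ℝ → ℂ}
    (hg : ContinuousOn g (Icc a b)) (hderiv : ∀ x ∈ Ioo a b, HasDerivAt g (g' x) x)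
    (hg' : IntervalIntegrable g' volume a b) (hends : g a = g b) (n : ℤ) :
    fourierCoeffOn hab g' n = 2 * π * Complex.I * n / (b - a) * fourierCoeffOn hab g n := by
  rcases eq_or_ne n 0 with rfl | hn
  · simp [fourierCoeffOn_eq_integral, hends,
      intervalIntegral.integral_eq_sub_of_hasDerivAt_of_le hab.le hg hderiv hg']
  · have hba : (b - a : ℂ) ≠ 0 := by exact_mod_cast (sub_pos.2 hab).ne'
    have hπ : (π : ℂ) ≠ 0 := by exact_mod_cast pi_ne_zero
    have hn' : (n : ℂ) ≠ 0 := by exact_mod_cast hn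
    rw [fourierCoeffOn_of_hasDerivAt_Ioo (f := g) hab hn (by rwa [uIcc_of_le hab.le])
      (by simpa [min_eq_left hab.le, max_eq_right hab.le] using hderiv) hg', hends]
    field_simp
    ring

lemma memLp_two_restrict_Ioc_of_continuousOn {E : Type*} [NormedAddCommGroup E] {g : ℝ → E}
    (hg : ContinuousOn g (Icc a b)) : MemLp g 2 (volume.restrict (Ioc a b)) := by
  have hmeas : AEStronglyMeasurable g (volume.restrict (Ioc a b)) :=
    (hg.mono Ioc_subset_Icc_self).aestronglyMeasurable measurableSet_Ioc
  exact (memLp_two_iff_integrable_sq_norm hmeas).2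
    ((hg.norm.pow 2).integrableOn_Icc.mono_set Ioc_subset_Icc_self)

theorem wirtinger_inequality_of_fourierCoeffOn_eq_zero (hab : a < b) {g g' : ℝ → ℂ}
    (hg : ContinuousOn g (Icc a b)) (hderiv : ∀ x ∈ Ioo a b, HasDerivAt g (g' x) x)
    (hg' : MemLp g' 2 (volume.restrict (Ioc a b))) (hends : g a = g b) {m : ℕ}
    (hzero : ∀ n : ℤ, |n| < m → fourierCoeffOn hab g n = 0) :
    (2 * π * m / (b - a)) ^ 2 * ∫ x in a..b, ‖g x‖ ^ 2 ≤ ∫ x in a..b, ‖g' x‖ ^ 2 := by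
  have hba : 0 < b - a := sub_pos.2 hab
  have hint : IntervalIntegrable g' volume a b :=
    (intervalIntegrable_iff_integrableOn_Ioc_of_le hab.le).2 (hg'.integrable one_le_two)
  have hcoeff (n : ℤ) : (2 * π * m / (b - a)) ^ 2 * ‖fourierCoeffOn hab g n‖ ^ 2 ≤
      ‖fourierCoeffOn hab g' n‖ ^ 2 := by
    rcases lt_or_ge |n| (m : ℤ) with hn | hn
    · simp [hzero n hn]
    · have hmn : (m : ℝ) ≤ |(n : ℝ)| := by exact_mod_cast hn
      have hnorm : ‖(2 * π * Complex.I * n / (b - a) : ℂ)‖ = 2 * π * |(n : ℝ)| / (b - a) := by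
        rw [← Complex.ofReal_sub]
        simp only [norm_div, norm_mul, Complex.norm_ofNat, Complex.norm_real, norm_eq_abs,
          abs_of_pos pi_pos, Complex.norm_I, mul_one, Complex.norm_intCast, abs_of_pos hba]
      rw [fourierCoeffOn_deriv_of_eq_endpoints hab hg hderiv hint hends, norm_mul, mul_pow, hnorm]
      gcongr
  have hparseval := hasSum_le hcoeff
    ((hasSum_sq_fourierCoeffOn hab (memLp_two_restrict_Ioc_of_continuousOn hg)).mul_left _)
    (hasSum_sq_fourierCoeffOn hab hg')
  rw [smul_eq_mul, smul_eq_mul, mul_left_comm] at hparseval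
  exact le_of_mul_le_mul_left hparseval (inv_pos.2 hba)

lemma exists_real_ne_zero_sum_mul_eq_zero [Fintype ι] {d : ι → ℤ → ℂ}
    (hd : ∀ i n, d i (-n) = conj (d i n)) {m : ℕ} (hm : 2 * m - 1 < Fintype.card ι) :
    ∃ w : ι → ℝ, w ≠ 0 ∧ ∀ n : ℤ, |n| < m → ∑ i, (w i : ℂ) * d i n = 0 := by
  -- One real condition `re z = im z` per index suffices: those at `n` and `-n` together read
  -- `re z = im z = -im z`.
  let A : Matrix (Finset.Ioo (-(m : ℤ)) m) ι ℝ := .of fun n i ↦ (d i n).re - (d i n).im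
  have hker : LinearMap.ker A.mulVecLin ≠ ⊥ := by
    apply LinearMap.ker_ne_bot_of_finrank_lt
    simp only [Module.finrank_fintype_fun_eq_card, Fintype.card_coe, Int.card_Ioo]
    omega
  obtain ⟨w, hw, hw0⟩ := (Submodule.ne_bot_iff _).1 hker
  refine ⟨w, hw0, fun n hn ↦ ?_⟩
  set z : ℤ → ℂ := fun n ↦ ∑ i, (w i : ℂ) * d i n
  have hre_eq_im (n : ℤ) (hn : |n| < m) : (z n).re = (z n).im := by
    have hrow : ∑ i, ((d i n).re - (d i n).im) * w i = 0 :=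
      congrFun (LinearMap.mem_ker.1 hw) ⟨n, Finset.mem_Ioo.2 (abs_lt.1 hn)⟩
    simp only [sub_mul, Finset.sum_sub_distrib, sub_eq_zero] at hrow
    simpa [z, mul_comm] using hrow
  have hconj : z (-n) = conj (z n) := by simp [z, hd]
  have hneg := hre_eq_im (-n) (by rwa [abs_neg])
  rw [hconj, Complex.conj_re, Complex.conj_im] at hneg
  have hpos := hre_eq_im n hn
  have hre : (z n).re = 0 := by linarith
  exact Complex.ext hre (hpos ▸ hre)

theorem exists_ne_zero_sq_mul_integral_sq_sum_le [Fintype ι] (hab : a < b) {u u' : ι → ℝ → ℝ}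
    (hu : ∀ i, ContinuousOn (u i) (Icc a b))
    (hderiv : ∀ i, ∀ x ∈ Ioo a b, HasDerivAt (u i) (u' i x) x)
    (hu' : ∀ i, MemLp (u' i) 2 (volume.restrict (Ioc a b))) (hends : ∀ i, u i a = u i b)
    {m : ℕ} (hm : 2 * m - 1 < Fintype.card ι) :
    ∃ w : ι → ℝ, w ≠ 0 ∧
      (2 * π * m / (b - a)) ^ 2 * ∫ x in a..b, (∑ i, w i * u i x) ^ 2 ≤
        ∫ x in a..b, (∑ i, w i * u' i x) ^ 2 := by
  have hint (i : ι) : IntervalIntegrable (fun x ↦ (u i x : ℂ)) volume a b :=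
    (Complex.continuous_ofReal.comp_continuousOn (hu i)).intervalIntegrable_of_Icc hab.le
  obtain ⟨w, hw0, hw⟩ := exists_real_ne_zero_sum_mul_eq_zero
    (fun i ↦ fourierCoeffOn_ofReal_neg hab (u i)) hm
  have hwirtinger := wirtinger_inequality_of_fourierCoeffOn_eq_zero hab
    (g := fun x ↦ ((∑ i, w i * u i x : ℝ) : ℂ)) (g' := fun x ↦ ((∑ i, w i * u' i x : ℝ) : ℂ))
    (by fun_prop)
    (fun x hx ↦ (HasDerivAt.fun_sum fun i _ ↦ (hderiv i x hx).const_mul (w i)).ofReal_comp)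
    (memLp_finsetSum _ fun i _ ↦ (hu' i).const_mul (w i)).ofReal
    (by simp only [hends])
    (fun n hn ↦ by push_cast; rw [fourierCoeffOn_sum_mul hab hint, hw n hn])
  refine ⟨w, hw0, ?_⟩
  simpa only [Complex.norm_real, norm_eq_abs, sq_abs] using hwirtinger

end Fourier

section Gram

open MeasureTheory

variable {ι : Type*} {a b : ℝ} {g : ι → ℝ → ℝ}

lemma integral_sq_sum_mul [Fintype ι]
    (hg : ∀ i j, IntervalIntegrable (fun x ↦ g i x * g j x) volume a b) (w : ι → ℝ) :
    ∫ x in a..b, (∑ i, w i * g i x) ^ 2 =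
      ∑ i, ∑ j, w i * w j * ∫ x in a..b, g i x * g j x := by
  simp only [sq, Finset.sum_mul_sum, mul_mul_mul_comm (w _) (g _ _)]
  have hterm (i j : ι) :
      IntervalIntegrable (fun x ↦ w i * w j * (g i x * g j x)) volume a b :=
    (hg i j).const_mul _
  have hrow (i : ι) :
      IntervalIntegrable (fun x ↦ ∑ j, w i * w j * (g i x * g j x)) volume a b := by
    simpa only [Finset.sum_fn] using IntervalIntegrable.sum Finset.univ fun j _ ↦ hterm i j
  rw [intervalIntegral.integral_finsetSum fun i _ ↦ hrow i]
  refine Finset.sum_congr rfl fun i _ ↦ ?_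
  rw [intervalIntegral.integral_finsetSum fun j _ ↦ hterm i j]
  simp only [intervalIntegral.integral_const_mul]

lemma integral_sq_pos_of_periodic {T : ℝ} (hT : 0 < T) {g : ℝ → ℝ} (hg : Continuous g)
    (hper : Function.Periodic g T) (hne : g ≠ 0) : 0 < ∫ x in (0 : ℝ)..T, g x ^ 2 := by
  obtain ⟨x, hx⟩ := Function.ne_iff.1 hne
  obtain ⟨y, hy, hxy⟩ := hper.exists_mem_Ico₀ hT x
  exact intervalIntegral.integral_pos hT (by fun_prop) (fun _ _ ↦ sq_nonneg _)
    ⟨y, Set.Ico_subset_Icc_self hy, sq_pos_of_ne_zero (hxy ▸ hx)⟩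

lemma linearIndependent_of_integral_mul_eq_zero
    (hg : ∀ i j, IntervalIntegrable (fun x ↦ g i x * g j x) volume a b)
    (horth : Pairwise fun i j ↦ ∫ x in a..b, g i x * g j x = 0)
    (hself : ∀ i, ∫ x in a..b, g i x ^ 2 ≠ 0) : LinearIndependent ℝ g := by
  refine linearIndependent_iff'.2 fun s w hw j hj ↦ ?_
  have hzero (x : ℝ) : ∑ i ∈ s, w i * (g i x * g j x) = 0 := by
    simpa [mul_assoc, Finset.sum_mul] using congrArg (· * g j x) (congrFun hw x)
  have hsum : ∑ i ∈ s, w i * ∫ x in a..b, g i x * g j x = 0 := by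
    simp only [← intervalIntegral.integral_const_mul]
    rw [← intervalIntegral.integral_finsetSum fun i _ ↦ (hg i j).const_mul (w i)]
    simp only [hzero, intervalIntegral.integral_zero]
  rw [Finset.sum_eq_single j (fun i _ hij ↦ by rw [horth hij, mul_zero]) (absurd hj)] at hsum
  simp only [← sq] at hsum
  exact (mul_eq_zero.1 hsum).resolve_right (hself j)

end Gram

/-- `u` is an `f`-eigenfunction with `f`-eigenvalue `μ` on the circle of length `T`; functions on
the circle are encoded as `T`-periodic functions on `ℝ`. The zero function is not excluded. -/
structure IsFEigenfunction (T : ℝ) (f : ℝ → ℝ) (μ : ℝ) (u : ℝ → ℝ) : Prop where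
  contDiff : ContDiff ℝ 2 u
  periodic : Function.Periodic u T
  integral_mul_eq_zero : ∫ θ in (0 : ℝ)..T, f θ * u θ = 0
  exists_deriv_deriv_add : ∃ c : ℝ, ∀ θ, deriv (deriv u) θ + μ * u θ = c * f θ

section Periodic

variable {T : ℝ} {u w : ℝ → ℝ}

lemma periodic_deriv_of_periodic (hu : Function.Periodic u T) : Function.Periodic (deriv u) T :=
  fun x ↦ by rw [← deriv_comp_add_const, hu.funext]

lemma integral_deriv_mul_deriv_of_periodic (hu : ContDiff ℝ 2 u) (hw : ContDiff ℝ 1 w)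
    (hu_per : Function.Periodic u T) (hw_per : Function.Periodic w T) :
    ∫ θ in (0 : ℝ)..T, deriv u θ * deriv w θ = -∫ θ in (0 : ℝ)..T, deriv (deriv u) θ * w θ := by
  have hu' : ContDiff ℝ 1 (deriv u) := hu.deriv'
  rw [intervalIntegral.integral_mul_deriv_eq_deriv_mul
    (fun x _ ↦ (hu'.differentiable one_ne_zero x).hasDerivAt)
    (fun x _ ↦ (hw.differentiable one_ne_zero x).hasDerivAt)
    ((hu'.continuous_deriv le_rfl).intervalIntegrable _ _)
    ((hw.continuous_deriv le_rfl).intervalIntegrable _ _),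
    (periodic_deriv_of_periodic hu_per).eq, hw_per.eq, sub_self, zero_sub]

end Periodic

namespace IsFEigenfunction

open MeasureTheory

variable {T : ℝ} {f : ℝ → ℝ}

lemma continuous_deriv {μ : ℝ} {u : ℝ → ℝ} (hu : IsFEigenfunction T f μ u) :
    Continuous (deriv u) :=
  hu.contDiff.continuous_deriv one_le_two

lemma integral_deriv_mul_deriv {μ ν : ℝ} {u w : ℝ → ℝ} (hu : IsFEigenfunction T f μ u)
    (hw : IsFEigenfunction T f ν w) :
    ∫ θ in (0 : ℝ)..T, deriv u θ * deriv w θ = μ * ∫ θ in (0 : ℝ)..T, u θ * w θ := by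
  have hu_cont := hu.contDiff.continuous
  have hw_cont := hw.contDiff.continuous
  have hu'' : Continuous (deriv (deriv u)) :=
    (hu.contDiff.deriv' : ContDiff ℝ 1 (deriv u)).continuous_deriv le_rfl
  obtain ⟨c, hc⟩ := hu.exists_deriv_deriv_add
  have hresidual : ∫ θ in (0 : ℝ)..T, (deriv (deriv u) θ + μ * u θ) * w θ = 0 := by
    simp only [hc, mul_assoc, intervalIntegral.integral_const_mul, hw.integral_mul_eq_zero,
      mul_zero]
  simp only [add_mul, mul_assoc] at hresidual
  rw [intervalIntegral.integral_add (Continuous.intervalIntegrable (by fun_prop) _ _)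
    (Continuous.intervalIntegrable (by fun_prop) _ _),
    intervalIntegral.integral_const_mul] at hresidual
  rw [integral_deriv_mul_deriv_of_periodic hu.contDiff (hw.contDiff.of_le one_le_two) hu.periodic
    hw.periodic]
  linarith

lemma eq_or_integral_mul_eq_zero {μ ν : ℝ} {u w : ℝ → ℝ} (hu : IsFEigenfunction T f μ u)
    (hw : IsFEigenfunction T f ν w) : μ = ν ∨ ∫ θ in (0 : ℝ)..T, u θ * w θ = 0 := by
  have hsymm := hw.integral_deriv_mul_deriv hu
  simp only [mul_comm (deriv w _), mul_comm (w _), hu.integral_deriv_mul_deriv hw] at hsymm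
  exact mul_eq_mul_right_iff.1 hsymm

variable {ι : Type*} [Fintype ι] {u : ι → ℝ → ℝ} {μ : ι → ℝ} {M : ℝ}

theorem integral_sq_sum_deriv_le (hT : 0 ≤ T) (hu : ∀ i, IsFEigenfunction T f (μ i) (u i))
    (hM : ∀ i, μ i ≤ M) (w : ι → ℝ) :
    ∫ θ in (0 : ℝ)..T, (∑ i, w i * deriv (u i) θ) ^ 2 ≤
      M * ∫ θ in (0 : ℝ)..T, (∑ i, w i * u i θ) ^ 2 := by
  have hu_cont (i : ι) : Continuous (u i) := (hu i).contDiff.continuous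
  -- This integral is the difference of the two sides: if `u i` and `u j` are not orthogonal then
  -- `μ i = μ j`, so `√(M - μ i) * √(M - μ j) = M - μ i`.
  have hgap : 0 ≤ ∫ θ in (0 : ℝ)..T, (∑ i, w i * √(M - μ i) * u i θ) ^ 2 :=
    intervalIntegral.integral_nonneg hT fun _ _ ↦ sq_nonneg _
  have hentry (i j : ι) :
      w i * √(M - μ i) * (w j * √(M - μ j)) * ∫ θ in (0 : ℝ)..T, u i θ * u j θ =
        M * (w i * w j * ∫ θ in (0 : ℝ)..T, u i θ * u j θ) -
          w i * w j * ∫ θ in (0 : ℝ)..T, deriv (u i) θ * deriv (u j) θ := by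
    rw [(hu i).integral_deriv_mul_deriv (hu j)]
    rcases (hu i).eq_or_integral_mul_eq_zero (hu j) with hμ | horth
    · rw [← hμ, mul_mul_mul_comm, mul_self_sqrt (sub_nonneg.2 (hM i))]
      ring
    · simp only [horth, mul_zero, sub_self]
  have hint (i j : ι) : IntervalIntegrable (fun θ ↦ u i θ * u j θ) volume 0 T :=
    ((hu_cont i).mul (hu_cont j)).intervalIntegrable _ _
  have hint' (i j : ι) : IntervalIntegrable (fun θ ↦ deriv (u i) θ * deriv (u j) θ) volume 0 T :=
    ((hu i).continuous_deriv.mul (hu j).continuous_deriv).intervalIntegrable _ _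
  rw [integral_sq_sum_mul hint] at hgap ⊢
  rw [integral_sq_sum_mul hint']
  simp only [hentry, Finset.sum_sub_distrib, ← Finset.mul_sum] at hgap
  exact sub_nonneg.1 hgap

end IsFEigenfunction

theorem kth_f_eigenvalue_ge_previous_eigenvalue_circle_general {ι : Type*} [Fintype ι] [Nonempty ι]
    {T M : ℝ} (hT : 0 < T) {f : ℝ → ℝ} {u : ι → ℝ → ℝ} {μ : ι → ℝ}
    (hu : ∀ i, IsFEigenfunction T f (μ i) (u i)) (hlin : LinearIndependent ℝ u)
    (hM : ∀ i, μ i ≤ M) :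
    (2 * π * (Fintype.card ι / 2 : ℕ) / T) ^ 2 ≤ M := by
  have hu_cont (i : ι) : Continuous (u i) := (hu i).contDiff.continuous
  have hcard : 2 * (Fintype.card ι / 2) - 1 < Fintype.card ι := by
    have := Fintype.card_pos (α := ι)
    omega
  obtain ⟨w, hw0, hlower⟩ := exists_ne_zero_sq_mul_integral_sq_sum_le hT
    (fun i ↦ (hu_cont i).continuousOn)
    (fun i x _ ↦ ((hu i).contDiff.differentiable two_ne_zero x).hasDerivAt)
    (fun i ↦ memLp_two_restrict_Ioc_of_continuousOn (hu i).continuous_deriv.continuousOn)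
    (fun i ↦ (hu i).periodic.eq.symm) hcard
  have hpos : 0 < ∫ θ in (0 : ℝ)..T, (∑ i, w i * u i θ) ^ 2 := by
    refine integral_sq_pos_of_periodic hT (by fun_prop) (fun θ ↦ ?_) fun hzero ↦ hw0 ?_
    · simp only [(hu _).periodic θ]
    · refine funext (Fintype.linearIndependent_iff.1 hlin w (funext fun θ ↦ ?_))
      simpa using congrFun hzero θ
  rw [sub_zero] at hlower
  exact le_of_mul_le_mul_right
    (hlower.trans (IsFEigenfunction.integral_sq_sum_deriv_le hT.le hu hM w)) hpos

theorem kth_f_eigenvalue_ge_previous_eigenvalue_circle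
    (k : ℕ) (hk : 2 ≤ k)
    (f : ℝ → ℝ)
    (hf_pos : ∀ θ, 0 < f θ)
    (hf_cont : Continuous f)
    (hf_per : ∀ θ, f (θ + 2 * π) = f θ)
    (u : Fin k → ℝ → ℝ) (μ c : Fin k → ℝ)
    (hu_C2 : ∀ i, ContDiff ℝ 2 (u i))
    (hu_per : ∀ i θ, u i (θ + 2 * π) = u i θ)
    (hu_ne : ∀ i, ¬ ∀ θ, u i θ = 0)
    (hu_orth : ∀ i j, i ≠ j → (∫ θ in (0:ℝ)..(2 * π), u i θ * u j θ) = 0)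
    (hfu : ∀ i, (∫ θ in (0:ℝ)..(2 * π), f θ * u i θ) = 0)
    (heig : ∀ i θ, deriv (deriv (u i)) θ + μ i * u i θ = c i * f θ)
    (hμ_mono : Monotone μ) :
    (((k / 2 : ℕ) : ℝ)) ^ 2 ≤ μ ⟨k - 1, by omega⟩ := by
  have hu_cont (i : Fin k) : Continuous (u i) := (hu_C2 i).continuous
  have hself (i : Fin k) : 0 < ∫ θ in (0 : ℝ)..(2 * π), u i θ ^ 2 :=
    integral_sq_pos_of_periodic two_pi_pos (hu_cont i) (hu_per i) fun h ↦ hu_ne i (congrFun h)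
  have hlin : LinearIndependent ℝ u :=
    linearIndependent_of_integral_mul_eq_zero
      (fun i j ↦ ((hu_cont i).mul (hu_cont j)).intervalIntegrable _ _)
      hu_orth fun i ↦ (hself i).ne'
  have hlast (i : Fin k) : i ≤ ⟨k - 1, by omega⟩ := Fin.le_def.2 (Nat.le_sub_one_of_lt i.isLt)
  have : Nonempty (Fin k) := ⟨⟨k - 1, by omega⟩⟩
  have hbound := kth_f_eigenvalue_ge_previous_eigenvalue_circle_general two_pi_pos
    (fun i ↦ ⟨hu_C2 i, hu_per i, hfu i, c i, heig i⟩) hlin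
    (fun i ↦ hμ_mono (hlast i))
  simpa [mul_div_cancel_left₀ _ two_pi_pos.ne'] using hbound
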